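/- (Row Laplace expansion) Let T be an n×n (p,u)-matrix over a K-algebra A and fix a t-shuffle σ ∈ S_n, i.e. σ(1) < ⋯ < σ(t) and σ(t+1) < ⋯ < σ(n). Then det_q(T) = Σ_α ((−q)_α / (−q)_σ) · det_q(T^{σ(1)…σ(t)}_{α(1)…α(t)}) · det_q(T^{σ(t+1)…σ(n)}_{α(t+1)…α(n)}), where the sum runs over all t-shuffles α ∈ S_n with α(1) < ⋯ < α(t) and α(t+1) < ⋯ < α(n). -/

import Mathlib

open Finset

variable {K : Type*} [Field K] {A : Type*} [Ring A] [Algebra K A]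

/-- The `(p,u)`-condition on the multiparameters: `u` is a unit with `u² ≠ -1`, the
`pᵢⱼ, qᵢⱼ` are units with `pᵢⱼqᵢⱼ = u²` for `i < j`, `pᵢⱼpⱼᵢ = qᵢⱼqⱼᵢ = 1` and
`pᵢᵢ = qᵢᵢ = 1`. -/
def PUCondition {N : ℕ} (p q : Fin N → Fin N → K) (u : K) : Prop :=
  u ≠ 0 ∧ u ^ 2 ≠ -1 ∧
    (∀ i j : Fin N, i < j → p i j * q i j = u ^ 2) ∧
    (∀ i j : Fin N, p i j * p j i = 1) ∧
    (∀ i j : Fin N, q i j * q j i = 1) ∧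
    (∀ i : Fin N, p i i = 1 ∧ q i i = 1)

/-- A `(p,u)`-matrix over the `K`-algebra `A`. -/
def IsPUMatrix {N : ℕ} (p q : Fin N → Fin N → K) (u : K)
    (T : Matrix (Fin N) (Fin N) A) : Prop :=
  ∀ i j k l : Fin N, i < j → k < l →
    T i k * T i l = q k l • (T i l * T i k) ∧
    T i k * T j k = p i j • (T j k * T i k) ∧
    q k l • (T i l * T j k) = p i j • (T j k * T i l) ∧
    (q k l)⁻¹ • (T i k * T j l) - (q i j)⁻¹ • (T j l * T i k)
      = (1 - u⁻¹ ^ 2) • (T i l * T j k)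

/-- Ordered product `f 0 * f 1 * ⋯ * f (t-1)` in a (possibly noncommutative) ring. -/
def oprod {t : ℕ} (f : Fin t → A) : A := ((List.finRange t).map f).prod

/-- The sign `(−q)_σ = (−1)^{ℓ(σ)} ∏_{i<j, σ(i)>σ(j)} q_{σ(j)σ(i)}`. -/
def qSign {N : ℕ} (q : Fin N → Fin N → K) (σ : Equiv.Perm (Fin N)) : K :=
  ∏ x ∈ Finset.univ.filter
      (fun x : Fin N × Fin N => x.1 < x.2 ∧ σ x.2 < σ x.1),
    (-q (σ x.2) (σ x.1))

/-- The quantum determinant `det_q(T) = Σ_σ (−q)_σ t_{1σ(1)} ⋯ t_{Nσ(N)}`. -/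
def qdet {N : ℕ} (q : Fin N → Fin N → K) (T : Matrix (Fin N) (Fin N) A) : A :=
  ∑ σ : Equiv.Perm (Fin N), qSign q σ • oprod (fun i => T i (σ i))

/-- The quantum minor with row indices `r` and column indices `c`. -/
def qminor {N t : ℕ} (q : Fin N → Fin N → K) (T : Matrix (Fin N) (Fin N) A)
    (r c : Fin t → Fin N) : A :=
  ∑ σ : Equiv.Perm (Fin t),
    qSign (fun a b => q (c a) (c b)) σ • oprod (fun a => T (r a) (c (σ a)))

/-!
The sign satisfies the cocycle identity `(−q)_{στ} = (−q)_σ (−q')_τ`, where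
`q' i j = q (σ i) (σ j)`. Every permutation is uniquely `αβ` with `α` a shuffle and `β` preserving
the two blocks, so the cocycle identity turns the sum defining a minor into a sum over shuffles of
products of two smaller minors. The relations between the entries enter only to show that permuting
the rows by `σ` multiplies a minor by `(−q)_σ`. By the cocycle identity this need only be checked
for adjacent transpositions, where the relations make the terms of `α` and `α * swap` cancel in
pairs.
-/

theorem oprod_succ {n : ℕ} (f : Fin (n + 1) → A) : oprod f = f 0 * oprod (fun i => f i.succ) := by
  simp [oprod, List.finRange_succ, Function.comp_def]

theorem oprod_add {t m : ℕ} (f : Fin (t + m) → A) :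
    oprod f = oprod (fun i => f (Fin.castAdd m i)) * oprod (fun i => f (Fin.natAdd t i)) := by
  simp only [oprod, ← List.ofFn_eq_map, ← List.prod_append, ← List.ofFn_fin_append]
  rw [Fin.append_castAdd_natAdd]

theorem exists_oprod_eq_mul_adjacent_mul {n : ℕ} (f : Fin (n + 1) → A) (k : Fin n) :
    ∃ L R : A, ∀ g : Fin (n + 1) → A, (∀ i, i ≠ k.castSucc → i ≠ k.succ → g i = f i) →
      oprod g = L * (g k.castSucc * g k.succ) * R := by
  induction n with
  | zero => exact k.elim0
  | succ n ih =>
    cases k using Fin.cases with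
    | zero =>
      refine ⟨1, oprod fun i => f i.succ.succ, fun g hg => ?_⟩
      have htail : (fun i : Fin n => g i.succ.succ) = fun i => f i.succ.succ :=
        funext fun i => hg _ (by simp) (by simp [Fin.ext_iff])
      rw [oprod_succ, oprod_succ, htail, one_mul, mul_assoc]
      rfl
    | succ k =>
      obtain ⟨L, R, hLR⟩ := ih (fun i => f i.succ) k
      refine ⟨f 0 * L, R, fun g hg => ?_⟩
      have htail := hLR (fun i => g i.succ) fun i h₁ h₂ =>
        hg _ (by simpa [Fin.ext_iff] using h₁) (by simpa using h₂)
      rw [oprod_succ, htail, hg 0 (by simp [Fin.ext_iff]) (by simp [Fin.ext_iff])]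
      simp only [mul_assoc, Fin.castSucc_succ]

theorem qSign_eq_prod_prod {N : ℕ} (q : Fin N → Fin N → K) (σ : Equiv.Perm (Fin N)) :
    qSign q σ = ∏ x, ∏ y, if x < y ∧ σ y < σ x then -q (σ y) (σ x) else 1 := by
  rw [qSign, prod_filter, Fintype.prod_prod_type]

theorem qSign_eq_prod_Ioi {N : ℕ} (q : Fin N → Fin N → K) (σ : Equiv.Perm (Fin N)) :
    qSign q σ = ∏ x, ∏ y ∈ Ioi x, if σ y < σ x then -q (σ y) (σ x) else 1 := by
  rw [qSign_eq_prod_prod]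
  refine prod_congr rfl fun x _ => ?_
  simp only [ite_and, ← prod_filter, filter_lt_eq_Ioi]

@[simp]
theorem qSign_one {N : ℕ} (q : Fin N → Fin N → K) : qSign q 1 = 1 := by
  rw [qSign_eq_prod_Ioi]
  exact prod_eq_one fun x _ => prod_eq_one fun y hy => if_neg (mem_Ioi.1 hy).not_gt

theorem prod_prod_Ioi_min_max_perm {ι M : Type*} [Fintype ι] [LinearOrder ι]
    [LocallyFiniteOrderTop ι] [LocallyFiniteOrderBot ι] [CommMonoid M]
    (τ : Equiv.Perm ι) (h : ι → ι → M) :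
    ∏ x, ∏ y ∈ Ioi x, h (min (τ x) (τ y)) (max (τ x) (τ y)) = ∏ x, ∏ y ∈ Ioi x, h x y := by
  let F : ι → ι → M := fun x y => if x < y then h x y else 1
  have hF : ∀ x y, y ∈ Ioi x →
      h (min (τ x) (τ y)) (max (τ x) (τ y)) = F (τ y) (τ x) * F (τ x) (τ y) := by
    intro x y hy
    rcases lt_or_gt_of_ne (τ.injective.ne (mem_Ioi.1 hy).ne) with hlt | hlt <;>
      simp [F, hlt, hlt.not_gt, hlt.le]
  calc ∏ x, ∏ y ∈ Ioi x, h (min (τ x) (τ y)) (max (τ x) (τ y))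
      = ∏ x, ∏ y ∈ Ioi x, F (τ y) (τ x) * F (τ x) (τ y) :=
        prod_congr rfl fun x _ => prod_congr rfl (hF x)
    _ = ∏ x, ∏ y ∈ {x}ᶜ, F (τ y) (τ x) :=
        prod_prod_Ioi_mul_eq_prod_prod_off_diag fun y x => F (τ y) (τ x)
    _ = ∏ x, ∏ y, F (τ y) (τ x) :=
        prod_congr rfl fun x _ => prod_subset (subset_univ _) fun y _ hy => by simp_all [F]
    _ = ∏ x, ∏ y, F y x :=
        (Fintype.prod_congr _ _ fun x => Equiv.prod_comp τ fun y => F y (τ x)).trans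
          (Equiv.prod_comp τ fun x => ∏ y, F y x)
    _ = ∏ x, ∏ y ∈ Ioi x, h x y := by
        rw [prod_comm]
        simp only [F, ← prod_filter, filter_lt_eq_Ioi]

theorem qSign_mul {N : ℕ} {q : Fin N → Fin N → K} (hq : ∀ i j, q i j * q j i = 1)
    (σ τ : Equiv.Perm (Fin N)) :
    qSign q (σ * τ) = qSign q σ * qSign (fun a b => q (σ a) (σ b)) τ := by
  rw [qSign_eq_prod_Ioi q σ, ← prod_prod_Ioi_min_max_perm τ, qSign_eq_prod_Ioi, qSign_eq_prod_Ioi,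
    ← prod_mul_distrib]
  refine prod_congr rfl fun x _ => ?_
  rw [← prod_mul_distrib]
  refine prod_congr rfl fun y hy => ?_
  have hxy : x ≠ y := (mem_Ioi.1 hy).ne
  have hστ_ne : σ (τ x) ≠ σ (τ y) := (σ * τ).injective.ne hxy
  rcases lt_or_gt_of_ne (τ.injective.ne hxy) with hτ | hτ <;>
    rcases lt_or_gt_of_ne hστ_ne with hστ | hστ <;>
    simp [hτ.le, hτ, hτ.not_gt, hστ, hστ.not_gt, hq]

theorem qSign_swap_castSucc_succ {n : ℕ} (q : Fin (n + 1) → Fin (n + 1) → K) (k : Fin n) :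
    qSign q (Equiv.swap k.castSucc k.succ) = -q k.castSucc k.succ := by
  have hinv : univ.filter (fun x : Fin (n + 1) × Fin (n + 1) => x.1 < x.2 ∧
      Equiv.swap k.castSucc k.succ x.2 < Equiv.swap k.castSucc k.succ x.1)
      = {(k.castSucc, k.succ)} := by
    ext ⟨x, y⟩
    simp only [mem_filter, mem_univ, true_and, mem_singleton, Prod.mk.injEq,
      Equiv.swap_apply_def, Fin.lt_def, Fin.ext_iff, apply_ite Fin.val, Fin.val_castSucc,
      Fin.val_succ]
    split_ifs <;> omega
  simp [qSign, hinv]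

theorem qSign_ne_zero {N : ℕ} {q : Fin N → Fin N → K} (hq : ∀ i j, q i j * q j i = 1)
    (σ : Equiv.Perm (Fin N)) : qSign q σ ≠ 0 :=
  prod_ne_zero_iff.2 fun _ _ => neg_ne_zero.2 (left_ne_zero_of_mul_eq_one (hq _ _))

/-- The cross relations, for pairs of distinct rows, of (the transpose of) a two-parameter Manin
matrix; `s` is the parameter matrix of the rows and `q` that of the columns. They are the part of
the `(p,u)`-relations which makes `∑ σ, qSign q σ • oprod (fun i => T i (σ i))` alternate, up to
factors from `s`, in its rows. -/
def IsRowManin {ι κ : Type*} (s : ι → ι → K) (q : κ → κ → K) (T : Matrix ι κ A) : Prop :=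
  ∀ a b, a ≠ b → ∀ c d,
    T b c * T a d + s a b • (T a c * T b d)
      = q c d • (T b d * T a c + s a b • (T a d * T b c))

theorem IsRowManin.of_lt {ι κ : Type*} [LinearOrder ι] [LinearOrder κ] {s : ι → ι → K}
    {q : κ → κ → K} {T : Matrix ι κ A} (hs : ∀ a b, s a b * s b a = 1)
    (hq : ∀ c d, q c d * q d c = 1) (hq_diag : ∀ c, q c c = 1)
    (h : ∀ a b c d, a < b → c < d → T b c * T a d + s a b • (T a c * T b d)
      = q c d • (T b d * T a c + s a b • (T a d * T b c))) :
    IsRowManin s q T := by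
  have hcols : ∀ a b, a < b → ∀ c d, T b c * T a d + s a b • (T a c * T b d)
      = q c d • (T b d * T a c + s a b • (T a d * T b c)) := by
    intro a b hab c d
    rcases lt_trichotomy c d with hcd | rfl | hcd
    · exact h a b c d hab hcd
    · rw [hq_diag, one_smul]
    · rw [h a b d c hab hcd, smul_smul, hq, one_smul]
  intro a b hab c d
  rcases lt_or_gt_of_ne hab with hab | hab
  · exact hcols a b hab c d
  · have hrel := congrArg (s a b • ·) (hcols b a hab c d)
    simp only [smul_add, smul_comm (s a b) (q c d), smul_smul (s a b), hs, one_smul] at hrel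
    rw [add_comm, hrel, smul_add, add_comm]

theorem PUCondition.q_mul_q_swap {N : ℕ} {p q : Fin N → Fin N → K} {u : K}
    (hpu : PUCondition p q u) (i j : Fin N) : q i j * q j i = 1 :=
  hpu.2.2.2.2.1 i j

theorem IsPUMatrix.isRowManin {N : ℕ} {p q : Fin N → Fin N → K} {u : K}
    {T : Matrix (Fin N) (Fin N) A} (hT : IsPUMatrix p q u T) (hpu : PUCondition p q u) :
    IsRowManin q q T := by
  have hq := hpu.q_mul_q_swap
  obtain ⟨hu, -, hpq, hp, -, hdiag⟩ := hpu
  refine .of_lt hq hq (fun c => (hdiag c).2) fun a b c d hab hcd => ?_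
  obtain ⟨-, -, hanti, hcross⟩ := hT a b c d hab hcd
  have hp0 : p a b ≠ 0 := left_ne_zero_of_mul_eq_one (hp a b)
  have hqab0 : q a b ≠ 0 := left_ne_zero_of_mul_eq_one (hq a b)
  have hqcd0 : q c d ≠ 0 := left_ne_zero_of_mul_eq_one (hq c d)
  have hpinv : (p a b)⁻¹ = q a b * u⁻¹ ^ 2 := by
    field_simp
    linear_combination -hpq a b hab
  have hbc : T b c * T a d = (q a b * u⁻¹ ^ 2 * q c d) • (T a d * T b c) := by
    rw [← hpinv, mul_smul, hanti, smul_smul, inv_mul_cancel₀ hp0, one_smul]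
  have hbd : T b d * T a c
      = q a b • ((q c d)⁻¹ • (T a c * T b d) - (1 - u⁻¹ ^ 2) • (T a d * T b c)) := by
    rw [← hcross, sub_sub_cancel, smul_smul, mul_inv_cancel₀ hqab0, one_smul]
  have hac : q a b • (T a c * T b d) = q c d • q a b • (q c d)⁻¹ • (T a c * T b d) := by
    rw [smul_comm (q c d), smul_smul (q c d), mul_inv_cancel₀ hqcd0, one_smul]
  rw [hbc, hbd, hac]
  module

theorem IsRowManin.oprod_exchange {ι κ : Type*} {s : ι → ι → K} {q : κ → κ → K}
    {T : Matrix ι κ A} (hT : IsRowManin s q T) {n : ℕ} {r : Fin (n + 1) → ι}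
    (hr : Function.Injective r) (c : Fin (n + 1) → κ) (k : Fin n) :
    oprod (fun i => T (r (Equiv.swap k.castSucc k.succ i)) (c i))
        + s (r k.castSucc) (r k.succ) • oprod (fun i => T (r i) (c i))
      = q (c k.castSucc) (c k.succ) •
        (oprod (fun i => T (r (Equiv.swap k.castSucc k.succ i))
            (c (Equiv.swap k.castSucc k.succ i)))
          + s (r k.castSucc) (r k.succ) •
            oprod (fun i => T (r i) (c (Equiv.swap k.castSucc k.succ i)))) := by
  obtain ⟨L, R, hLR⟩ := exists_oprod_eq_mul_adjacent_mul (fun i => T (r i) (c i)) k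
  have hswap : ∀ i, i ≠ k.castSucc → i ≠ k.succ → Equiv.swap k.castSucc k.succ i = i :=
    fun i => Equiv.swap_apply_of_ne_of_ne
  have hrel := congrArg (L * · * R) <|
    hT _ _ (hr.ne (Fin.castSucc_lt_succ (i := k)).ne) (c k.castSucc) (c k.succ)
  rw [hLR _ fun i h₁ h₂ => by rw [hswap i h₁ h₂], hLR _ fun _ _ _ => rfl,
    hLR _ fun i h₁ h₂ => by rw [hswap i h₁ h₂], hLR _ fun i h₁ h₂ => by rw [hswap i h₁ h₂]]
  simpa only [Equiv.swap_apply_left, Equiv.swap_apply_right, mul_add, add_mul, mul_smul_comm,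
    smul_mul_assoc, smul_add] using hrel

theorem IsRowManin.qminor_comp_swap {N n : ℕ} {s q : Fin N → Fin N → K}
    {T : Matrix (Fin N) (Fin N) A} (hT : IsRowManin s q T) (hq : ∀ i j, q i j * q j i = 1)
    {r : Fin (n + 1) → Fin N} (hr : Function.Injective r) (c : Fin (n + 1) → Fin N) (k : Fin n) :
    qminor q T (fun i => r (Equiv.swap k.castSucc k.succ i)) c
      = -s (r k.castSucc) (r k.succ) • qminor q T r c := by
  rw [neg_smul, ← add_eq_zero_iff_eq_neg, qminor, qminor, smul_sum, ← sum_add_distrib]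
  refine sum_involution (fun α _ => α * Equiv.swap k.castSucc k.succ) ?_ ?_
    (fun _ _ => mem_univ _) ?_
  · intro α _
    have hsign : qSign (fun a b => q (c a) (c b)) (α * Equiv.swap k.castSucc k.succ)
        = qSign (fun a b => q (c a) (c b)) α * -q (c (α k.castSucc)) (c (α k.succ)) := by
      rw [qSign_mul fun i j => hq (c i) (c j), qSign_swap_castSucc_succ]
    have hexch := hT.oprod_exchange hr (fun i => c (α i)) k
    simp only [smul_comm (s _ _) (qSign _ _), ← smul_add, Equiv.Perm.mul_apply]
    rw [hexch, hsign, mul_neg, neg_smul, mul_smul, add_neg_cancel]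
  · intro α _ _ h
    exact Fin.castSucc_lt_succ.ne (Equiv.swap_eq_one_iff.1 (mul_eq_left.1 h))
  · intro α _
    rw [mul_assoc, Equiv.swap_mul_self, mul_one]

theorem IsRowManin.qminor_comp_perm {N n : ℕ} {s q : Fin N → Fin N → K}
    {T : Matrix (Fin N) (Fin N) A} (hT : IsRowManin s q T) (hs : ∀ i j, s i j * s j i = 1)
    (hq : ∀ i j, q i j * q j i = 1) {r : Fin n → Fin N} (hr : Function.Injective r)
    (c : Fin n → Fin N) (σ : Equiv.Perm (Fin n)) :
    qminor q T (fun i => r (σ i)) c = qSign (fun a b => s (r a) (r b)) σ • qminor q T r c := by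
  cases n with
  | zero => rw [Subsingleton.elim σ 1, qSign_one, one_smul]; rfl
  | succ n =>
    refine Submonoid.induction_of_closure_eq_top_right (Equiv.Perm.mclosure_swap_castSucc_succ n)
      σ ?_ ?_
    · rw [qSign_one, one_smul]; rfl
    · rintro σ _ ⟨k, rfl⟩ ih
      simp only [Equiv.Perm.mul_apply]
      rw [hT.qminor_comp_swap hq (r := fun i => r (σ i)) (hr.comp σ.injective) c k, ih,
        qSign_mul fun i j => hs (r i) (r j), qSign_swap_castSucc_succ, smul_smul, mul_comm]

/-- The block permutations, i.e. the Young subgroup `S_t × S_m` of `S_{t+m}`: the shuffles are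
representatives of its left cosets. -/
def blockPerm {t m : ℕ} : Equiv.Perm (Fin t) × Equiv.Perm (Fin m) →* Equiv.Perm (Fin (t + m)) :=
  finSumFinEquiv.permCongrHom.toMonoidHom.comp (Equiv.Perm.sumCongrHom (Fin t) (Fin m))

@[simp]
theorem blockPerm_castAdd {t m : ℕ} (z : Equiv.Perm (Fin t) × Equiv.Perm (Fin m)) (x : Fin t) :
    blockPerm z (Fin.castAdd m x) = Fin.castAdd m (z.1 x) := by
  simp [blockPerm, Equiv.permCongr_apply]

@[simp]
theorem blockPerm_natAdd {t m : ℕ} (z : Equiv.Perm (Fin t) × Equiv.Perm (Fin m)) (x : Fin m) :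
    blockPerm z (Fin.natAdd t x) = Fin.natAdd t (z.2 x) := by
  simp [blockPerm, Equiv.permCongr_apply]

theorem qSign_blockPerm {t m : ℕ} (q : Fin (t + m) → Fin (t + m) → K)
    (z : Equiv.Perm (Fin t) × Equiv.Perm (Fin m)) :
    qSign q (blockPerm z) = qSign (fun x y => q (Fin.castAdd m x) (Fin.castAdd m y)) z.1
      * qSign (fun x y => q (Fin.natAdd t x) (Fin.natAdd t y)) z.2 := by
  have hlt : ∀ (x : Fin t) (y : Fin m), Fin.castAdd m x < Fin.natAdd t y := fun x y =>
    Fin.lt_def.2 (by simp only [Fin.val_castAdd, Fin.val_natAdd]; omega)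
  have hleft : ∀ x y : Fin t, Fin.castAdd m x < Fin.castAdd m y ↔ x < y := fun _ _ => Iff.rfl
  simp [qSign_eq_prod_prod, Fin.prod_univ_add, hlt, (hlt _ _).not_gt, hleft]

/-- The `t`-shuffles: permutations that are increasing on the first `t` indices and on the
remaining ones. Reducible, so that the decidability of the quantifiers is found by instance
search. -/
abbrev IsShuffle {n : ℕ} (t : ℕ) (α : Equiv.Perm (Fin n)) : Prop :=
  ∀ a b : Fin n, a < b → ((b : ℕ) < t ∨ t ≤ (a : ℕ)) → α a < α b

theorem isShuffle_iff_strictMono {t m : ℕ} (α : Equiv.Perm (Fin (t + m))) :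
    IsShuffle t α ↔ (StrictMono fun x : Fin t => α (Fin.castAdd m x)) ∧
      StrictMono fun x : Fin m => α (Fin.natAdd t x) := by
  constructor
  · intro h
    exact ⟨fun x y hxy => h _ _ hxy (.inl (by simp)),
      fun x y hxy => h _ _ (by simpa using hxy) (.inr (by simp))⟩
  · rintro ⟨hleft, hright⟩ a b hab hblock
    cases a using Fin.addCases <;> cases b using Fin.addCases
    · exact hleft hab
    · simp at hblock; omega
    · simp [Fin.lt_def] at hab; omega
    · exact hright (by simpa using hab)

theorem strictMono_comp_perm_injective {ι κ : Type*} [LinearOrder ι] [WellFoundedLT ι]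
    [Preorder κ] {f g : ι → κ} (hf : StrictMono f) (hg : StrictMono g) {a b : Equiv.Perm ι}
    (h : ∀ x, f (a x) = g (b x)) : a = b := by
  have hfg : f = g := by
    rw [← hf.range_inj hg, ← a.surjective.range_comp f, ← b.surjective.range_comp g]
    exact congrArg Set.range (funext h)
  exact Equiv.ext fun x => hf.injective (by rw [h, hfg])

theorem bijective_shuffle_mul_blockPerm (t m : ℕ) :
    Function.Bijective fun z : {α : Equiv.Perm (Fin (t + m)) // IsShuffle t α} ×
      (Equiv.Perm (Fin t) × Equiv.Perm (Fin m)) => z.1.1 * blockPerm z.2 := by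
  constructor
  · rintro ⟨⟨α, hα⟩, a, b⟩ ⟨⟨α', hα'⟩, a', b'⟩ h
    obtain ⟨hleft, hright⟩ := (isShuffle_iff_strictMono α).1 hα
    obtain ⟨hleft', hright'⟩ := (isShuffle_iff_strictMono α').1 hα'
    obtain rfl : a = a' := strictMono_comp_perm_injective hleft hleft' fun x => by
      simpa using DFunLike.congr_fun h (Fin.castAdd m x)
    obtain rfl : b = b' := strictMono_comp_perm_injective hright hright' fun x => by
      simpa using DFunLike.congr_fun h (Fin.natAdd t x)
    obtain rfl : α = α' := mul_right_cancel h
    rfl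
  · intro β
    let z := (Tuple.sort fun x : Fin t => β (Fin.castAdd m x),
      Tuple.sort fun x : Fin m => β (Fin.natAdd t x))
    have hβz : IsShuffle t (β * blockPerm z) := by
      refine (isShuffle_iff_strictMono _).2 ⟨Monotone.strictMono_of_injective ?_ ?_,
        Monotone.strictMono_of_injective ?_ ?_⟩
      · simpa [z] using! Tuple.monotone_sort fun x : Fin t => β (Fin.castAdd m x)
      · exact (β * blockPerm z).injective.comp (Fin.castAdd_injective t m)
      · simpa [z] using! Tuple.monotone_sort fun x : Fin m => β (Fin.natAdd t x)
      · exact (β * blockPerm z).injective.comp (Fin.natAdd_injective m t)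
    exact ⟨(⟨_, hβz⟩, z⁻¹), by simp⟩

theorem sum_perm_eq_sum_shuffle {M : Type*} [AddCommMonoid M] {t m : ℕ}
    (f : Equiv.Perm (Fin (t + m)) → M) :
    ∑ β, f β = ∑ α with IsShuffle t α, ∑ z, f (α * blockPerm z) := by
  rw [← (bijective_shuffle_mul_blockPerm t m).sum_comp f, Fintype.sum_prod_type,
    sum_subtype (p := IsShuffle t) (univ.filter (IsShuffle t)) (by simp) fun α =>
      ∑ z, f (α * blockPerm z)]

theorem qminor_eq_sum_shuffle {N t m : ℕ} {q : Fin N → Fin N → K}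
    (hq : ∀ i j, q i j * q j i = 1) (T : Matrix (Fin N) (Fin N) A) (r c : Fin (t + m) → Fin N) :
    qminor q T r c = ∑ α with IsShuffle t α, qSign (fun a b => q (c a) (c b)) α •
      (qminor q T (fun a => r (Fin.castAdd m a)) (fun a => c (α (Fin.castAdd m a)))
        * qminor q T (fun a => r (Fin.natAdd t a)) (fun a => c (α (Fin.natAdd t a)))) := by
  rw [qminor, sum_perm_eq_sum_shuffle]
  refine sum_congr rfl fun α _ => ?_
  rw [qminor, qminor, sum_mul_sum, smul_sum, Fintype.sum_prod_type]
  simp only [smul_sum, smul_mul_smul_comm, smul_smul, oprod_add, Equiv.Perm.mul_apply,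
    blockPerm_castAdd, blockPerm_natAdd, qSign_mul fun i j => hq (c i) (c j), qSign_blockPerm]

theorem qdet_laplace_row_general {N n t m : ℕ} {s q : Fin N → Fin N → K}
    (hs : ∀ i j, s i j * s j i = 1) (hq : ∀ i j, q i j * q j i = 1)
    {T : Matrix (Fin N) (Fin N) A} (hT : IsRowManin s q T) {r : Fin n → Fin N}
    (hr : Function.Injective r) (c : Fin n → Fin N) (h : t + m = n) (σ : Equiv.Perm (Fin n)) :
    qminor q T r c = ∑ α : Equiv.Perm (Fin n) with IsShuffle t α,
      ((qSign (fun a b => s (r a) (r b)) σ)⁻¹ * qSign (fun a b => q (c a) (c b)) α) •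
        (qminor q T (fun a => r (σ (Fin.cast h (Fin.castAdd m a))))
            (fun a => c (α (Fin.cast h (Fin.castAdd m a))))
          * qminor q T (fun a => r (σ (Fin.cast h (Fin.natAdd t a))))
            (fun a => c (α (Fin.cast h (Fin.natAdd t a))))) := by
  subst h
  have hσ : qSign (fun a b => s (r a) (r b)) σ ≠ 0 := qSign_ne_zero (fun i j => hs (r i) (r j)) σ
  simp only [Fin.cast_eq_self, mul_smul, ← smul_sum]
  rw [eq_inv_smul_iff₀ hσ, ← hT.qminor_comp_perm hs hq hr c σ, qminor_eq_sum_shuffle hq]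

/-- row Laplace expansion of the quantum determinant along a fixed
`t`-shuffle `σ` of the rows, summed over all `t`-shuffles `α` of the columns. -/
theorem qdet_laplace_row {n : ℕ} (p q : Fin n → Fin n → K) (u : K)
    (hpu : PUCondition p q u) (T : Matrix (Fin n) (Fin n) A)
    (hT : IsPUMatrix p q u T) (t : ℕ) (ht : t ≤ n)
    (σ : Equiv.Perm (Fin n))
    (hσ : ∀ a b : Fin n, a < b → ((b : ℕ) < t ∨ t ≤ (a : ℕ)) → σ a < σ b) :
    qdet q T
      = ∑ α ∈ Finset.univ.filter
          (fun α : Equiv.Perm (Fin n) =>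
            ∀ a b : Fin n, a < b → ((b : ℕ) < t ∨ t ≤ (a : ℕ)) → α a < α b),
          ((qSign q σ)⁻¹ * qSign q α) •
            (qminor q T (fun a : Fin t => σ (Fin.castLE ht a))
                (fun a : Fin t => α (Fin.castLE ht a))
              * qminor q T
                (fun a : Fin (n - t) => σ ⟨t + a.val, by have := a.isLt; omega⟩)
                (fun a : Fin (n - t) => α ⟨t + a.val, by have := a.isLt; omega⟩)) :=
  -- `qdet q T` unfolds to `qminor q T id id`.
  qdet_laplace_row_general hpu.q_mul_q_swap hpu.q_mul_q_swap (hT.isRowManin hpu)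
    Function.injective_id id (Nat.add_sub_of_le ht) σ
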